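/- The singular values of the realigned matrix are local-unitary invariants: if U' = (u₁⊗u₂) U (v₁⊗v₂) with u₁,u₂,v₁,v₂ unitary d×d matrices, then U'^R (U'^R)† and U^R (U^R)† are unitarily similar; in particular tr[(U'^R U'^{R†})²] = tr[(U^R U^{R†})²]. -/

import Mathlib

open Matrix

open Kronecker

/-- Realignment: `(U^R)[(β,α),(j,i)] = U[(i,α),(j,β)]`. -/
def realign (d : ℕ) (U : Matrix (Fin d × Fin d) (Fin d × Fin d) ℂ) :
    Matrix (Fin d × Fin d) (Fin d × Fin d) ℂ :=
  Matrix.of fun p q => U (q.2, p.2) (q.1, p.1)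

section Realignment

variable {m n p q m' n' p' q' R : Type*}

/-- The realignment of an operator between bipartite spaces whose four factors may have different
dimensions. Rows of the result are indexed by the second factors and columns by the first ones,
in the order used by `realign`. -/
def realignment (U : Matrix (m × n) (p × q) R) : Matrix (q × n) (p × m) R :=
  Matrix.of fun r c => U (c.2, r.2) (c.1, r.1)

-- The familiar form `(u₁ ⊗ v₁ᵀ) U^R (u₂ᵀ ⊗ v₂)` of the right-hand side belongs to the convention
-- `U^R[(i,j),(α,β)] = U[(i,α),(j,β)]`, which has rows and columns exchanged.
theorem realignment_kronecker_mul_mul_kronecker [CommSemiring R]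
    [Fintype m] [Fintype n] [Fintype p] [Fintype q]
    (u₁ : Matrix m' m R) (u₂ : Matrix n' n R) (U : Matrix (m × n) (p × q) R)
    (v₁ : Matrix p p' R) (v₂ : Matrix q q' R) :
    realignment ((u₁ ⊗ₖ u₂) * U * (v₁ ⊗ₖ v₂)) =
      (v₂ᵀ ⊗ₖ u₂) * realignment U * (v₁ ⊗ₖ u₁ᵀ) := by
  ext ⟨b, a⟩ ⟨j, i⟩
  simp only [realignment, of_apply, mul_apply, Fintype.sum_prod_type, kroneckerMap_apply,
    transpose_apply, Finset.sum_mul]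
  refine Finset.sum_congr rfl fun j' _ => ?_
  rw [Finset.sum_comm]
  refine Finset.sum_congr rfl fun i' _ => Finset.sum_congr rfl fun b' _ =>
    Finset.sum_congr rfl fun a' _ => ?_
  ring

end Realignment

section UnitaryInvariance

variable {l m n p R : Type*} [Fintype m] [Fintype n]

theorem mul_mul_mul_conjTranspose_of_mul_conjTranspose_eq_one [Semiring R] [StarRing R]
    [Fintype p] [DecidableEq n] (W : Matrix l m R) (A : Matrix m n R) {V : Matrix n p R}
    (hV : V * Vᴴ = 1) :
    (W * A * V) * (W * A * V)ᴴ = W * (A * Aᴴ) * Wᴴ :=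
  calc (W * A * V) * (W * A * V)ᴴ
      = W * A * (V * Vᴴ) * Aᴴ * Wᴴ := by simp only [conjTranspose_mul, Matrix.mul_assoc]
    _ = W * (A * Aᴴ) * Wᴴ := by rw [hV, Matrix.mul_one, Matrix.mul_assoc W]

theorem trace_pow_unitary_conj [CommSemiring R] [StarRing R] [DecidableEq n]
    {W : Matrix n n R} (hW : W ∈ unitary (Matrix n n R)) (A : Matrix n n R) (k : ℕ) :
    trace ((W * A * Wᴴ) ^ k) = trace (A ^ k) := by
  let w : (Matrix n n R)ˣ := Unitary.toUnits ⟨W, hW⟩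
  have conj_pow : (W * A * Wᴴ) ^ k = W * A ^ k * Wᴴ := w.conj_pow A k
  rw [conj_pow]
  exact trace_units_conj w (A ^ k)

end UnitaryInvariance

theorem realign_singular_values_LU_invariant_general {m n p q R : Type*}
    [Fintype m] [Fintype n] [Fintype p] [Fintype q]
    [DecidableEq m] [DecidableEq n] [DecidableEq p] [DecidableEq q]
    [CommRing R] [StarRing R] (U : Matrix (m × n) (p × q) R)
    {u₁ : Matrix m m R} {u₂ : Matrix n n R} {v₁ : Matrix p p R} {v₂ : Matrix q q R}
    (hu₁ : u₁ ∈ unitaryGroup m R) (hu₂ : u₂ ∈ unitaryGroup n R)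
    (hv₁ : v₁ ∈ unitaryGroup p R) (hv₂ : v₂ ∈ unitaryGroup q R) :
    (∃ W ∈ unitaryGroup (q × n) R,
      realignment ((u₁ ⊗ₖ u₂) * U * (v₁ ⊗ₖ v₂)) *
          (realignment ((u₁ ⊗ₖ u₂) * U * (v₁ ⊗ₖ v₂)))ᴴ =
        W * (realignment U * (realignment U)ᴴ) * Wᴴ) ∧
    ∀ k : ℕ, trace ((realignment ((u₁ ⊗ₖ u₂) * U * (v₁ ⊗ₖ v₂)) *
        (realignment ((u₁ ⊗ₖ u₂) * U * (v₁ ⊗ₖ v₂)))ᴴ) ^ k) =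
      trace ((realignment U * (realignment U)ᴴ) ^ k) := by
  have hW : v₂ᵀ ⊗ₖ u₂ ∈ unitaryGroup (q × n) R :=
    kronecker_mem_unitary (transpose_mem_unitaryGroup_iff.2 hv₂) hu₂
  have hV : v₁ ⊗ₖ u₁ᵀ ∈ unitaryGroup (p × m) R :=
    kronecker_mem_unitary hv₁ (transpose_mem_unitaryGroup_iff.2 hu₁)
  rw [realignment_kronecker_mul_mul_kronecker,
    mul_mul_mul_conjTranspose_of_mul_conjTranspose_eq_one _ _ (mem_unitaryGroup_iff.1 hV)]
  exact ⟨⟨_, hW, rfl⟩, trace_pow_unitary_conj hW _⟩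

theorem realign_singular_values_LU_invariant (d : ℕ)
    (U : Matrix (Fin d × Fin d) (Fin d × Fin d) ℂ)
    (u₁ u₂ v₁ v₂ : Matrix (Fin d) (Fin d) ℂ)
    (hu₁ : u₁ ∈ Matrix.unitaryGroup (Fin d) ℂ)
    (hu₂ : u₂ ∈ Matrix.unitaryGroup (Fin d) ℂ)
    (hv₁ : v₁ ∈ Matrix.unitaryGroup (Fin d) ℂ)
    (hv₂ : v₂ ∈ Matrix.unitaryGroup (Fin d) ℂ) :
    (∃ W ∈ Matrix.unitaryGroup (Fin d × Fin d) ℂ,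
      realign d ((u₁ ⊗ₖ u₂) * U * (v₁ ⊗ₖ v₂)) *
          (realign d ((u₁ ⊗ₖ u₂) * U * (v₁ ⊗ₖ v₂)))ᴴ =
        W * (realign d U * (realign d U)ᴴ) * Wᴴ) ∧
    Matrix.trace ((realign d ((u₁ ⊗ₖ u₂) * U * (v₁ ⊗ₖ v₂)) *
        (realign d ((u₁ ⊗ₖ u₂) * U * (v₁ ⊗ₖ v₂)))ᴴ) ^ 2) =
      Matrix.trace ((realign d U * (realign d U)ᴴ) ^ 2) :=
  have invariant := realign_singular_values_LU_invariant_general U hu₁ hu₂ hv₁ hv₂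
  ⟨invariant.1, invariant.2 2⟩
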